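/- For every integer k ≥ 2, the k-vertex path graph P_k is Laplacian controllable by an input connected to one of its terminal vertices: if L is the Laplacian matrix of the path on vertex set {1,…,k} with edges {i, i+1} for i = 1,…,k−1, then the pair (L, e_1) is controllable. Equivalently, all k eigenvalues of L are distinct and every eigenvector of L has nonzero first entry. -/

import Mathlib

/-!
The three assertions reduce to controllability. The recursion
`e_{m+1} = d_m e_m - L e_m - e_{m-1}`, read off column `m` of the Laplacian, shows by strong
induction that `e_m` lies in the span of `e_0, L e_0, …, L ^ m e_0`; this is
`single_mem_krylov`, and it gives `isControllable_pathLap`.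

If `v` is an eigenvector of a symmetric `M` for `λ`, then `v ⬝ M ^ j b = λ ^ j (v ⬝ b)`, so
when `(M, b)` is controllable no eigenvector is orthogonal to `b`
(`IsControllable.eq_zero_of_dotProduct_eq_zero`). Hence eigenvectors of `L` have nonzero first
entry. Two orthonormal eigenvectors for the same eigenvalue would have a nontrivial combination
with vanishing first entry, so the eigenvalues are distinct, and they are exactly the roots of
the characteristic polynomial because `L` is real symmetric.
-/

/-- Laplacian matrix of the `k`-vertex path graph (0-indexed vertices
`0, 1, …, k-1` with edges `{i, i+1}`): tridiagonal with diagonal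
`(1, 2, …, 2, 1)` and `-1` on the sub- and superdiagonals. -/
def pathLap (k : ℕ) : Matrix (Fin k) (Fin k) ℝ :=
  Matrix.of fun i j =>
    if i = j then (if i.val = 0 ∨ i.val = k - 1 then 1 else 2)
    else if i.val + 1 = j.val ∨ j.val + 1 = i.val then -1 else 0

/-- `(M, b)` is controllable: `b, Mb, M²b, …` span the whole space. -/
def IsControllable {ι : Type} [Fintype ι] [DecidableEq ι]
    (M : Matrix ι ι ℝ) (b : ι → ℝ) : Prop :=
  Submodule.span ℝ (Set.range fun j : Fin (Fintype.card ι) => (M ^ (j : ℕ)).mulVec b) = ⊤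

open Matrix

theorem pathLap_isSymm (k : ℕ) : (pathLap k).IsSymm := by
  ext i j
  simp only [pathLap, Matrix.transpose_apply, Matrix.of_apply]
  by_cases h : i = j
  · subst h; rfl
  · simp only [h, Ne.symm h, if_false, or_comm]

/-- The span of `b, M b, …, M ^ m b`. -/
def krylov {ι : Type} [Fintype ι] [DecidableEq ι] (M : Matrix ι ι ℝ) (b : ι → ℝ) (m : ℕ) :
    Submodule ℝ (ι → ℝ) :=
  Submodule.span ℝ ((fun j : ℕ => (M ^ j).mulVec b) '' Set.Iic m)

section Krylov

variable {ι : Type} [Fintype ι] [DecidableEq ι] {M : Matrix ι ι ℝ} {b : ι → ℝ}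

theorem krylov_mono : Monotone (krylov M b) := fun _ _ h =>
  Submodule.span_mono (Set.image_mono (Set.Iic_subset_Iic.2 h))

theorem mulVec_mem_krylov_succ {m : ℕ} {v : ι → ℝ} (hv : v ∈ krylov M b m) :
    M.mulVec v ∈ krylov M b (m + 1) := by
  have h : krylov M b m ≤ (krylov M b (m + 1)).comap M.mulVecLin := by
    refine Submodule.span_le.2 ?_
    rintro _ ⟨j, hj, rfl⟩
    refine Submodule.subset_span ⟨j + 1, Nat.succ_le_succ hj, ?_⟩
    simp [pow_succ', Matrix.mulVec_mulVec]
  exact h hv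

theorem IsControllable.eq_zero_of_dotProduct_eq_zero (hM : M.IsSymm) (hc : IsControllable M b)
    {lam : ℝ} {v : ι → ℝ} (hv : M.mulVec v = lam • v) (hb : v ⬝ᵥ b = 0) : v = 0 := by
  have hvec : v ᵥ* M = lam • v := by rw [← hM.eq, Matrix.vecMul_transpose, hv]
  have hpow : ∀ j : ℕ, v ⬝ᵥ (M ^ j).mulVec b = 0 := by
    intro j
    induction j with
    | zero => simpa using hb
    | succ j ih =>
      rw [pow_succ', ← Matrix.mulVec_mulVec, Matrix.dotProduct_mulVec, hvec, smul_dotProduct, ih,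
        smul_zero]
  have hall : ∀ w : ι → ℝ, v ⬝ᵥ w = 0 := by
    intro w
    have hw : w ∈ Submodule.span ℝ
        (Set.range fun j : Fin (Fintype.card ι) => (M ^ (j : ℕ)).mulVec b) := by
      rw [show Submodule.span ℝ _ = ⊤ from hc]; trivial
    induction hw using Submodule.span_induction with
    | mem x hx => obtain ⟨j, rfl⟩ := hx; exact hpow j
    | zero => simp
    | add x y _ _ hx hy => rw [dotProduct_add, hx, hy, add_zero]
    | smul a x _ hx => rw [dotProduct_smul, hx, smul_zero]
  exact dotProduct_self_eq_zero.1 (hall v)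

end Krylov

/-- Column `m` of the Laplacian, for `m` not the last vertex, solved for `e_{m+1}`. The case
split on `m = 0` is needed since the vertex before `m` is then absent. -/
theorem single_succ_eq {k m : ℕ} (hm : m + 1 < k) :
    (Pi.single ⟨m + 1, hm⟩ 1 : Fin k → ℝ) =
      (if m = 0 then 1 else 2 : ℝ) • Pi.single ⟨m, by omega⟩ 1
        - (pathLap k).mulVec (Pi.single ⟨m, by omega⟩ 1)
        - if m = 0 then 0 else Pi.single ⟨m - 1, by omega⟩ 1 := by
  ext ⟨i, hi⟩
  rw [Matrix.mulVec_single_one]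
  simp only [Pi.sub_apply, Pi.smul_apply, Pi.single_apply, Matrix.col_apply, pathLap,
    Matrix.of_apply, Fin.mk.injEq, smul_eq_mul]
  by_cases h0 : m = 0
  · subst h0
    simp only [if_true, Pi.zero_apply]
    split_ifs <;> first | omega | (norm_num; done) | (exfalso; simp_all)
  · simp only [h0, if_false, Pi.single_apply, Fin.mk.injEq]
    split_ifs <;> first | omega | norm_num

theorem single_mem_krylov {k : ℕ} (hk : 0 < k) (m : ℕ) (hm : m < k) :
    (Pi.single ⟨m, hm⟩ 1 : Fin k → ℝ) ∈ krylov (pathLap k) (Pi.single ⟨0, hk⟩ 1) m := by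
  induction m using Nat.strong_induction_on with
  | _ m ih =>
    rcases m with _ | m
    · exact Submodule.subset_span ⟨0, Set.mem_Iic.2 le_rfl, by simp only [pow_zero, Matrix.one_mulVec]⟩
    · have hm' := ih m (by omega) (by omega)
      rw [single_succ_eq hm]
      refine sub_mem (sub_mem (Submodule.smul_mem _ _ (krylov_mono (Nat.le_succ m) hm'))
        (mulVec_mem_krylov_succ hm')) ?_
      split_ifs with h0
      · exact zero_mem _
      · exact krylov_mono (by omega) (ih (m - 1) (by omega) (by omega))

theorem isControllable_pathLap {k : ℕ} (hk : 0 < k) :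
    IsControllable (pathLap k) (Pi.single ⟨0, hk⟩ 1) := by
  refine top_le_iff.1 ?_
  rw [← (Pi.basisFun ℝ (Fin k)).span_eq, Submodule.span_le]
  rintro _ ⟨⟨m, hm⟩, rfl⟩
  rw [Pi.basisFun_apply]
  refine Submodule.span_mono ?_ (single_mem_krylov hk m hm)
  rintro _ ⟨j, hj, rfl⟩
  have hj' : j ≤ m := hj
  exact ⟨⟨j, by rw [Fintype.card_fin]; omega⟩, rfl⟩

theorem pathLap_eq_zero_of_apply_zero {k : ℕ} (hk : 0 < k) {lam : ℝ} {v : Fin k → ℝ}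
    (hv : (pathLap k).mulVec v = lam • v) (h0 : v ⟨0, hk⟩ = 0) : v = 0 :=
  (isControllable_pathLap hk).eq_zero_of_dotProduct_eq_zero (pathLap_isSymm k) hv
    (by simpa using h0)

theorem pathLap_isHermitian (k : ℕ) : (pathLap k).IsHermitian := by
  rw [Matrix.IsHermitian, Matrix.conjTranspose_eq_transpose_of_trivial]
  exact pathLap_isSymm k

theorem pathLap_eigenvalues_injective {k : ℕ} (hk : 0 < k) :
    Function.Injective (pathLap_isHermitian k).eigenvalues := by
  intro i j hij
  by_contra hne
  set H := pathLap_isHermitian k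
  set u : Fin k → Fin k → ℝ := fun i => (H.eigenvectorBasis i).ofLp
  have hev : ∀ i, (pathLap k).mulVec (u i) = H.eigenvalues i • u i :=
    H.mulVec_eigenvectorBasis
  have hnz : ∀ i, u i ⟨0, hk⟩ ≠ 0 := fun i h0 => by
    have h := pathLap_eq_zero_of_apply_zero hk (hev i) h0
    exact H.eigenvectorBasis.orthonormal.ne_zero i ((WithLp.ofLp_eq_zero 2).1 h)
  -- The combination of the two eigenvectors whose first entry cancels.
  have hcomb : u j ⟨0, hk⟩ • u i - u i ⟨0, hk⟩ • u j = 0 := by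
    refine pathLap_eq_zero_of_apply_zero hk (lam := H.eigenvalues i) ?_ ?_
    · rw [Matrix.mulVec_sub, Matrix.mulVec_smul, Matrix.mulVec_smul, hev, hev, ← hij, smul_sub,
        smul_comm, smul_comm (u i ⟨0, hk⟩)]
    · simp [mul_comm]
  have hcomb' : u j ⟨0, hk⟩ • H.eigenvectorBasis i - u i ⟨0, hk⟩ • H.eigenvectorBasis j = 0 :=
    (WithLp.ofLp_eq_zero 2).1 hcomb
  have hinner := congrArg (inner ℝ (H.eigenvectorBasis i)) hcomb'
  rw [inner_sub_right, inner_smul_right, inner_smul_right, inner_zero_right,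
    H.eigenvectorBasis.orthonormal.2 hne, real_inner_self_eq_norm_sq,
    H.eigenvectorBasis.orthonormal.1 i] at hinner
  exact hnz j (by simpa using hinner)

/-- the `k`-vertex path is Laplacian controllable by an input at a
terminal vertex: `(L, e₁)` is controllable; equivalently, all `k` eigenvalues of
`L` are distinct (the characteristic polynomial has `k` pairwise distinct roots)
and every eigenvector of `L` has nonzero first entry. -/
theorem path_controllable (k : ℕ) (hk : 2 ≤ k) :
    IsControllable (pathLap k) (fun i => if i = (⟨0, by omega⟩ : Fin k) then 1 else 0) ∧
    (Multiset.card (pathLap k).charpoly.roots = k ∧ (pathLap k).charpoly.roots.Nodup) ∧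
    (∀ (lam : ℝ) (v : Fin k → ℝ), v ≠ 0 → (pathLap k).mulVec v = lam • v →
      v ⟨0, by omega⟩ ≠ 0) := by
  have hk0 : 0 < k := by omega
  have hroots := (pathLap_isHermitian k).roots_charpoly_eq_eigenvalues
  refine ⟨?_, ⟨?_, ?_⟩, fun lam v hv hlam h0 =>
    hv (pathLap_eq_zero_of_apply_zero hk0 hlam h0)⟩
  · convert isControllable_pathLap hk0 using 1
    ext i
    simp [Pi.single_apply]
  · rw [hroots]; simp
  · rw [hroots]
    exact Finset.univ.nodup.map (RCLike.ofReal_injective.comp (pathLap_eigenvalues_injective hk0))
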